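/- Let (M, Ω, V) be a graded von Neumann algebra with modular data (J, Δ), and Z(M, V) = {x ∈ M : J x* J = x V} its V-twisted center. Then: (i) Z(M, V) ⊆ M^γ ∩ M^α, i.e. every x ∈ Z(M, V) satisfies V x V = x and Δ^{it} x Δ^{−it} = x for all t ∈ ℝ; (ii) every x ∈ Z(M, V) satisfies x y = (V y V) x for all y ∈ M; (iii) for all x₁, x₂ ∈ Z(M, V) the product x₁ x₂ lies in the Ad_V-invariant part Z(M)^γ of the center Z(M); (iv) for x ∈ Z(M, V) and z ∈ Z(M) one has x z = z x ∈ Z(M, V). -/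

import Mathlib

open scoped InnerProductSpace ComplexOrder

noncomputable section

variable {H : Type*} [NormedAddCommGroup H] [InnerProductSpace ℂ H] [CompleteSpace H]

/-- A graded von Neumann algebra in standard form: a von Neumann algebra `M` with a cyclic
and separating vector `Ω`, the associated modular data `(J, Δ^{it})` (characterized by the
Tomita-Takesaki relations below), and a `ℤ₂`-grading `V`. -/
structure GradedVN (H : Type*) [NormedAddCommGroup H] [InnerProductSpace ℂ H]
    [CompleteSpace H] where
  M : VonNeumannAlgebra H
  Ω : H
  cyclic : Dense {ξ : H | ∃ x ∈ M, x Ω = ξ}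
  separating : ∀ x ∈ M, x Ω = 0 → x = 0
  /-- the modular conjugation (an antiunitary involution) -/
  J : H → H
  J_add : ∀ ξ η, J (ξ + η) = J ξ + J η
  J_smul : ∀ (c : ℂ) (ξ), J (c • ξ) = starRingEnd ℂ c • J ξ
  J_inner : ∀ ξ η, ⟪J ξ, J η⟫_ℂ = ⟪η, ξ⟫_ℂ
  J_invol : ∀ ξ, J (J ξ) = ξ
  J_Ω : J Ω = Ω
  /-- the modular group `Δ^{it}` -/
  U : ℝ → H ≃ₗᵢ[ℂ] H
  U_zero : ∀ ξ, U 0 ξ = ξ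
  U_add : ∀ s t ξ, U (s + t) ξ = U s (U t ξ)
  U_cont : ∀ ξ, Continuous fun t : ℝ => U t ξ
  U_Ω : ∀ t, U t Ω = Ω
  J_U : ∀ t ξ, J (U t ξ) = U t (J ξ)
  flow_mem : ∀ t : ℝ, ∀ x ∈ M, ∃ y ∈ M, ∀ ξ, y ξ = U t (x (U (-t) ξ))
  /-- `J M J ⊆ M'` -/
  tomita : ∀ x ∈ M, ∀ y ∈ M, ∀ ξ, J (x (J (y ξ))) = y (J (x (J ξ)))
  /-- `S = J Δ^{1/2}` maps `xΩ` to `x*Ω`, expressed via analytic continuation of the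
  modular group. -/
  S_cond : ∀ x ∈ M, ∀ f : ℂ → H, Differentiable ℂ f → (∀ t : ℝ, f (t : ℂ) = U t (x Ω)) →
    J (f (-(Complex.I) / 2)) = star x Ω
  /-- the grading -/
  V : H →L[ℂ] H
  V_star : star V = V
  V_invol : ∀ ξ, V (V ξ) = ξ
  V_Ω : V Ω = Ω
  V_mem : ∀ x ∈ M, ∃ y ∈ M, ∀ ξ, y ξ = V (x (V ξ))

namespace GradedVN

variable (N : GradedVN H)

/-- The `V`-twisted center `Z(M, V) = {x ∈ M | J x* J = x V}`. -/
def twistedCenter : Set (H →L[ℂ] H) :=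
  {x | x ∈ N.M ∧ ∀ ξ, N.J (star x (N.J ξ)) = x (N.V ξ)}

/-- The center `Z(M)` of `M`. -/
def centerSet : Set (H →L[ℂ] H) :=
  {z | z ∈ N.M ∧ ∀ y ∈ N.M, z * y = y * z}

/-- The `Ad_V`-fixed points `M^γ`. -/
def gammaFixed : Set (H →L[ℂ] H) :=
  {x | x ∈ N.M ∧ ∀ ξ, N.V (x (N.V ξ)) = x ξ}

/-- The fixed points `M^α` of the modular flow. -/
def flowFixed : Set (H →L[ℂ] H) :=
  {x | x ∈ N.M ∧ ∀ (t : ℝ) (ξ), x (N.U t ξ) = N.U t (x ξ)}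

/-- The centralizer `Z_Ω(M)`. -/
def centralizerSet : Set (H →L[ℂ] H) :=
  {x | x ∈ N.M ∧ ∀ y ∈ N.M, ⟪N.Ω, x (y N.Ω)⟫_ℂ = ⟪N.Ω, y (x N.Ω)⟫_ℂ}

/-- The twisted center of the reduced algebra `(M_p, V_p)` for a central `Ad_V`-invariant
projection `p` (for such `p`, the modular conjugation of `(pMp, pΩ)` is `J` restricted
to `pH`, so the relative twisted center consists of the `p`-supported elements of `M`
satisfying the twisted-center relation). -/
def tcRel (p : H →L[ℂ] H) : Set (H →L[ℂ] H) :=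
  {x | x ∈ N.M ∧ x * p = x ∧ p * x = x ∧ ∀ ξ, N.J (star x (N.J ξ)) = x (N.V ξ)}

/-- `p` is an `Ad_V`-invariant central projection. -/
def IsCentralInvProj (p : H →L[ℂ] H) : Prop :=
  p ∈ N.centerSet ∧ star p = p ∧ p * p = p ∧ ∀ ξ, N.V (p (N.V ξ)) = p ξ

/-- `p` is an `Ad_V`-invariant central projection carrying a partial isometry in the
relative twisted center which is unitary on `pH`. -/
def HasPI (p : H →L[ℂ] H) : Prop :=
  N.IsCentralInvProj p ∧ ∃ u ∈ N.tcRel p, star u * u = p ∧ u * star u = p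

/-- Asymptotically abelian modular flow: `[α_t(x), y] → 0` weakly as `t → ∞`. -/
def AsympAbelian : Prop :=
  ∀ x ∈ N.M, ∀ y ∈ N.M, ∀ ξ η : H,
    Filter.Tendsto
      (fun t : ℝ => ⟪ξ, N.U t (x (N.U (-t) (y η))) - y (N.U t (x (N.U (-t) η)))⟫_ℂ)
      Filter.atTop (nhds 0)

/-- `V`-graded asymptotically abelian modular flow:
`[α_t(x), y]_V = α_t(x) y − (V y V) α_t(x) → 0` weakly as `t → ∞`. -/
def GradedAsympAbelian : Prop :=
  ∀ x ∈ N.M, ∀ y ∈ N.M, ∀ ξ η : H,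
    Filter.Tendsto
      (fun t : ℝ =>
        ⟪ξ, N.U t (x (N.U (-t) (y η))) - N.V (y (N.V (N.U t (x (N.U (-t) η)))))⟫_ℂ)
      Filter.atTop (nhds 0)

end GradedVN

/-!
Every element of `Z(M, V)` and every central element lies in the centralizer of the state
`ω = ⟨Ω, · Ω⟩`, so everything rests on the fact that the centralizer is fixed by the modular flow
`α`. For `x` in the centralizer put `x_a = ∫ exp (-(t - a)²) α_t(x) dt`, which again lies in the
centralizer, and let `F a = x_a Ω`, an entire function of `a` with `Δ^{is} F(a) = F(a + s)`. The
relation for `S` gives `J F(a - i/2) = x_a* Ω`, and with `J M J ⊆ M'` it also gives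
`⟨y* Ω, F(a)⟩ = ⟨J F(a + i/2), y Ω⟩` for `y ∈ M`. Since `ω(x_a y) = ω(y x_a)`, cyclicity of `Ω`
yields `F(a - i/2) = F(a + i/2)`. Hence `F` is bounded, so constant by Liouville's theorem, and
injectivity of the Gaussian transform shows that `Δ^{it} x Ω` does not depend on `t`.
-/

open MeasureTheory Filter Topology Complex
open scoped BoundedContinuousFunction FourierTransform

section ComplexGaussian

/-- The Gaussian `t ↦ exp (-(t - a)²)` on the real line, with complex centre `a`. -/
def complexGaussian (a : ℂ) (t : ℝ) : ℂ := cexp (-((t : ℂ) - a) ^ 2)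

theorem continuous_complexGaussian (a : ℂ) : Continuous (complexGaussian a) := by
  unfold complexGaussian
  fun_prop

theorem integrable_complexGaussian (a : ℂ) : Integrable (complexGaussian a) := by
  refine (integrable_cexp_quadratic (b := 1) (by simp) (2 * a) (-a ^ 2)).congr
    (.of_forall fun t => ?_)
  simp only [complexGaussian]
  ring_nf

theorem complexGaussian_add_ofReal (a : ℂ) (s t : ℝ) :
    complexGaussian (a + s) (t + s) = complexGaussian a t := by
  simp only [complexGaussian, ofReal_add, add_sub_add_right_eq_sub]

theorem hasDerivAt_complexGaussian (a : ℂ) (t : ℝ) :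
    HasDerivAt (fun b => complexGaussian b t) (2 * ((t : ℂ) - a) * complexGaussian a t) a := by
  refine ((((hasDerivAt_id a).const_sub (t : ℂ)).pow 2).neg).cexp.congr_deriv ?_
  simp only [complexGaussian, id_eq, Pi.neg_apply, Pi.pow_apply, Nat.cast_ofNat,
    Nat.add_one_sub_one, pow_one]
  ring

theorem norm_complexGaussian_le {a : ℂ} {R : ℝ} (ha : ‖a‖ ≤ R) (t : ℝ) :
    ‖complexGaussian a t‖ ≤ Real.exp (-t ^ 2 + 2 * R * |t| + R ^ 2) := by
  rw [complexGaussian, norm_exp, Real.exp_le_exp]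
  calc (-((t : ℂ) - a) ^ 2).re = -t ^ 2 + (2 * (t : ℂ) * a - a ^ 2).re := by
        rw [show -((t : ℂ) - a) ^ 2 = ((-t ^ 2 : ℝ) : ℂ) + (2 * (t : ℂ) * a - a ^ 2) by
          push_cast; ring, add_re, ofReal_re]
    _ ≤ -t ^ 2 + (‖2 * (t : ℂ) * a‖ + ‖a ^ 2‖) := by
        gcongr
        exact (re_le_norm _).trans (norm_sub_le _ _)
    _ = -t ^ 2 + 2 * ‖a‖ * |t| + ‖a‖ ^ 2 := by
        simp only [norm_mul, norm_pow, norm_real, norm_ofNat, Real.norm_eq_abs]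
        ring
    _ ≤ -t ^ 2 + 2 * R * |t| + R ^ 2 := by gcongr

theorem norm_deriv_complexGaussian_le {a : ℂ} {R : ℝ} (ha : ‖a‖ ≤ R) (t : ℝ) :
    ‖2 * ((t : ℂ) - a) * complexGaussian a t‖ ≤
      Real.exp (2 * (R + 1) ^ 2 + R ^ 2 + 2 * R) * Real.exp (-(1 / 2) * t ^ 2) := by
  have norm_factor_le : ‖2 * ((t : ℂ) - a)‖ ≤ Real.exp (2 * (|t| + R)) := by
    calc ‖2 * ((t : ℂ) - a)‖ ≤ 2 * (‖(t : ℂ)‖ + ‖a‖) := by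
          rw [norm_mul, norm_ofNat]
          gcongr
          exact norm_sub_le _ _
      _ ≤ 2 * (|t| + R) := by
          rw [norm_real, Real.norm_eq_abs]
          gcongr
      _ ≤ Real.exp (2 * (|t| + R)) := by linarith [Real.add_one_le_exp (2 * (|t| + R))]
  calc ‖2 * ((t : ℂ) - a) * complexGaussian a t‖
      ≤ Real.exp (2 * (|t| + R)) * Real.exp (-t ^ 2 + 2 * R * |t| + R ^ 2) := by
        rw [norm_mul]
        gcongr
        exact norm_complexGaussian_le ha t
    _ ≤ Real.exp (2 * (R + 1) ^ 2 + R ^ 2 + 2 * R) * Real.exp (-(1 / 2) * t ^ 2) := by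
        rw [← Real.exp_add, ← Real.exp_add, Real.exp_le_exp]
        -- AM-GM: `2 (R + 1) |t| ≤ t² / 2 + 2 (R + 1)²`
        nlinarith [sq_nonneg (|t| - 2 * (R + 1)), sq_abs t]

end ComplexGaussian

section GaussianTransform

variable {E F : Type*} [NormedAddCommGroup E] [NormedSpace ℂ E]
  [NormedAddCommGroup F] [NormedSpace ℂ F]

theorem integrable_complexGaussian_smul (a : ℂ) (g : ℝ →ᵇ E) :
    Integrable fun t => complexGaussian a t • g t :=
  (integrable_complexGaussian a).smul_bdd ‖g‖ g.continuous.aestronglyMeasurable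
    (.of_forall g.norm_coe_le_norm)

/-- The Gaussian (Weierstrass) transform `g ↦ ∫ exp (-(t - a)²) g(t) dt`, not normalized, of
bounded continuous vector-valued functions, evaluated at a complex point `a`. -/
def gaussianTransform (a : ℂ) : (ℝ →ᵇ E) →L[ℂ] E :=
  LinearMap.mkContinuous
    { toFun := fun g => ∫ t, complexGaussian a t • g t
      map_add' := fun g h => by
        simp only [BoundedContinuousFunction.add_apply, smul_add]
        exact integral_add (integrable_complexGaussian_smul a g)
          (integrable_complexGaussian_smul a h)
      map_smul' := fun c g => by
        simp only [BoundedContinuousFunction.smul_apply, RingHom.id_apply, smul_comm _ c,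
          integral_smul] }
    (∫ t, ‖complexGaussian a t‖) fun g => by
      rw [← integral_mul_const]
      refine norm_integral_le_of_norm_le ((integrable_complexGaussian a).norm.mul_const _)
        (.of_forall fun t => ?_)
      rw [norm_smul]
      gcongr
      exact g.norm_coe_le_norm t

theorem gaussianTransform_apply (a : ℂ) (g : ℝ →ᵇ E) :
    gaussianTransform a g = ∫ t, complexGaussian a t • g t := rfl

theorem map_gaussianTransform [CompleteSpace E] [CompleteSpace F] (L : E →L[ℂ] F) (a : ℂ)
    (g : ℝ →ᵇ E) :
    L (gaussianTransform a g) = gaussianTransform a (L.compLeftContinuousBounded ℝ g) := by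
  simp only [gaussianTransform_apply, ContinuousLinearMap.compLeftContinuousBounded_apply,
    ← map_smul]
  exact (L.integral_comp_comm (integrable_complexGaussian_smul a g)).symm

theorem gaussianTransform_add_ofReal (a : ℂ) (s : ℝ) (g : ℝ →ᵇ E) :
    gaussianTransform (a + s) g =
      gaussianTransform a (g.compContinuous ⟨fun t => t + s, by fun_prop⟩) := by
  simp only [gaussianTransform_apply, BoundedContinuousFunction.compContinuous_apply,
    ContinuousMap.coe_mk]
  rw [← integral_add_right_eq_self _ s]
  simp only [complexGaussian_add_ofReal]

theorem differentiable_gaussianTransform (g : ℝ →ᵇ E) :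
    Differentiable ℂ fun a => gaussianTransform a g := by
  intro a₀
  set R := ‖a₀‖ + 1
  have norm_le_of_mem_ball : ∀ a ∈ Metric.ball a₀ 1, ‖a‖ ≤ R := fun a ha =>
    (norm_le_norm_add_norm_sub' a a₀).trans (add_le_add le_rfl (mem_ball_iff_norm.1 ha).le)
  have integrable_bound : Integrable fun t : ℝ =>
      Real.exp (2 * (R + 1) ^ 2 + R ^ 2 + 2 * R) * Real.exp (-(1 / 2) * t ^ 2) * ‖g‖ :=
    ((integrable_exp_neg_mul_sq (by norm_num)).const_mul _).mul_const _
  have continuous_deriv : Continuous fun t : ℝ =>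
      (2 * ((t : ℂ) - a₀) * complexGaussian a₀ t) • g t := by
    have := continuous_complexGaussian a₀
    fun_prop
  refine (hasDerivAt_integral_of_dominated_loc_of_deriv_le (Metric.ball_mem_nhds a₀ one_pos)
    (.of_forall fun a => (integrable_complexGaussian_smul a g).aestronglyMeasurable)
    (integrable_complexGaussian_smul a₀ g) continuous_deriv.aestronglyMeasurable
    (.of_forall fun t a ha => ?_) integrable_bound
    (.of_forall fun t a _ => (hasDerivAt_complexGaussian a t).smul_const (g t))).2.differentiableAt
  rw [norm_smul]
  gcongr
  · exact norm_deriv_complexGaussian_le (norm_le_of_mem_ball a ha) t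
  · exact g.norm_coe_le_norm t

theorem fourier_complexGaussian_smul (g : ℝ →ᵇ E) (w : ℝ) :
    𝓕 (fun t => complexGaussian 0 t • g t) w =
      cexp (-(Real.pi * w) ^ 2) • gaussianTransform (-(Real.pi * w) * I) g := by
  rw [Real.fourier_real_eq_integral_exp_smul, gaussianTransform_apply, ← integral_smul]
  congr 1 with t
  rw [smul_smul, smul_smul, complexGaussian, complexGaussian, ← Complex.exp_add,
    ← Complex.exp_add]
  congr 2
  push_cast
  linear_combination (Real.pi * w : ℂ) ^ 2 * I_sq

theorem eq_of_gaussianTransform_eq [CompleteSpace E] {g h : ℝ →ᵇ E}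
    (hgh : ∀ a, gaussianTransform a g = gaussianTransform a h) : g = h := by
  set f : ℝ → E := fun t => complexGaussian 0 t • (g - h) t
  have fourier_eq_zero : 𝓕 f = 0 := by
    ext w
    rw [fourier_complexGaussian_smul, map_sub, hgh, sub_self, smul_zero, Pi.zero_apply]
  have f_eq_zero : f = 0 := by
    have continuous_f : Continuous f :=
      (continuous_complexGaussian 0).smul (g - h).continuous
    have integrable_fourier : Integrable (𝓕 f) := by
      rw [fourier_eq_zero]
      exact integrable_zero _ _ _
    rw [← continuous_f.fourierInv_fourier_eq (integrable_complexGaussian_smul 0 (g - h))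
      integrable_fourier, fourier_eq_zero]
    ext w
    simp [Real.fourierInv_eq]
  ext t
  exact sub_eq_zero.1 ((smul_eq_zero.1 (congrFun f_eq_zero t)).resolve_left (Complex.exp_ne_zero _))

end GaussianTransform

theorem apply_eq_apply_of_imaginary_period {E : Type*} [NormedAddCommGroup E] [NormedSpace ℂ E]
    {f : ℂ → E} (hf : Differentiable ℂ f) (norm_add_ofReal : ∀ a (s : ℝ), ‖f (a + s)‖ = ‖f a‖)
    {T : ℝ} (hT : T ≠ 0) (periodic : Function.Periodic f (T * I)) (a b : ℂ) : f a = f b := by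
  have periodic_axis : Function.Periodic (fun y : ℝ => f (y * I)) T := fun y => by
    simpa [add_mul] using periodic (y * I)
  obtain ⟨C, hC⟩ := (periodic_axis.isBounded_of_continuous hT
    (hf.continuous.comp (by fun_prop))).exists_norm_le
  refine hf.apply_eq_apply_of_bounded (isBounded_iff_forall_norm_le.2 ⟨C, ?_⟩) a b
  rintro _ ⟨w, rfl⟩
  rw [← re_add_im w, add_comm, norm_add_ofReal]
  exact hC _ ⟨w.im, rfl⟩

namespace GradedVN

variable (N : GradedVN H)

section Conjugations

theorem continuous_J : Continuous N.J :=
  (AddMonoidHomClass.isometry_of_norm (AddMonoidHom.mk' N.J N.J_add) fun ξ => by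
    rw [AddMonoidHom.mk'_apply, @norm_eq_sqrt_re_inner ℂ, N.J_inner,
      ← @norm_eq_sqrt_re_inner ℂ]).continuous

theorem inner_J_left_comm (ξ η : H) : ⟪N.J ξ, η⟫_ℂ = ⟪N.J η, ξ⟫_ℂ := by
  simpa only [N.J_invol] using N.J_inner ξ (N.J η)

theorem J_injective : Function.Injective N.J :=
  Function.LeftInverse.injective N.J_invol

theorem V_mul_V : N.V * N.V = 1 :=
  ContinuousLinearMap.ext N.V_invol

theorem inner_V_left (ξ η : H) : ⟪N.V ξ, η⟫_ℂ = ⟪ξ, N.V η⟫_ℂ := by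
  conv_lhs => rw [← N.V_star]
  exact N.V.adjoint_inner_left η ξ

theorem V_mul_mul_V_mem {x : H →L[ℂ] H} (hx : x ∈ N.M) : N.V * x * N.V ∈ N.M := by
  obtain ⟨y, hy, hyx⟩ := N.V_mem x hx
  rwa [show N.V * x * N.V = y from ContinuousLinearMap.ext fun ξ => (hyx ξ).symm]

theorem eq_of_apply_Ω_eq {x y : H →L[ℂ] H} (hx : x ∈ N.M) (hy : y ∈ N.M)
    (h : x N.Ω = y N.Ω) : x = y :=
  sub_eq_zero.1 (N.separating _ (sub_mem hx hy) (by
    rw [sub_apply, h, sub_self]))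

theorem eq_of_inner_apply_Ω_eq {ξ η : H} (h : ∀ y ∈ N.M, ⟪ξ, y N.Ω⟫_ℂ = ⟪η, y N.Ω⟫_ℂ) :
    ξ = η := by
  refine N.cyclic.eq_of_inner_left (𝕜 := ℂ) ?_
  rintro _ ⟨y, hy, rfl⟩
  exact h y hy

end Conjugations

section ModularFlow

/-- The modular flow `α_t(x) = Δ^{it} x Δ^{-it}`. -/
def modularFlow (t : ℝ) (x : H →L[ℂ] H) : H →L[ℂ] H :=
  (N.U t : H →L[ℂ] H) * x * (N.U (-t) : H →L[ℂ] H)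

theorem modularFlow_apply (t : ℝ) (x : H →L[ℂ] H) (ξ : H) :
    N.modularFlow t x ξ = N.U t (x (N.U (-t) ξ)) := rfl

theorem modularFlow_apply_Ω (t : ℝ) (x : H →L[ℂ] H) :
    N.modularFlow t x N.Ω = N.U t (x N.Ω) := by
  rw [modularFlow_apply, N.U_Ω]

theorem modularFlow_mem (t : ℝ) {x : H →L[ℂ] H} (hx : x ∈ N.M) : N.modularFlow t x ∈ N.M := by
  obtain ⟨y, hy, hyx⟩ := N.flow_mem t x hx
  rwa [show N.modularFlow t x = y from ContinuousLinearMap.ext fun ξ => (hyx ξ).symm]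

theorem U_neg_apply_U (t : ℝ) (ξ : H) : N.U (-t) (N.U t ξ) = ξ := by
  rw [← N.U_add, neg_add_cancel, N.U_zero]

theorem inner_Ω_U (t : ℝ) (ξ : H) : ⟪N.Ω, N.U t ξ⟫_ℂ = ⟪N.Ω, ξ⟫_ℂ := by
  simpa only [N.U_Ω] using (N.U t).inner_map_map N.Ω ξ

theorem modularFlow_mem_centralizerSet (t : ℝ) {x : H →L[ℂ] H} (hx : x ∈ N.centralizerSet) :
    N.modularFlow t x ∈ N.centralizerSet := by
  refine ⟨N.modularFlow_mem t hx.1, fun y hy => ?_⟩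
  have tracial := hx.2 _ (N.modularFlow_mem (-t) hy)
  calc ⟪N.Ω, N.modularFlow t x (y N.Ω)⟫_ℂ = ⟪N.Ω, x (N.modularFlow (-t) y N.Ω)⟫_ℂ := by
        rw [modularFlow_apply, inner_Ω_U, modularFlow_apply_Ω]
    _ = ⟪N.Ω, N.modularFlow (-t) y (x N.Ω)⟫_ℂ := tracial
    _ = ⟪N.Ω, y (N.modularFlow t x N.Ω)⟫_ℂ := by
        rw [modularFlow_apply, inner_Ω_U, modularFlow_apply_Ω, neg_neg]

theorem mem_flowFixed_of_U_apply_Ω_eq {x : H →L[ℂ] H} (hx : x ∈ N.M)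
    (h : ∀ t, N.U t (x N.Ω) = x N.Ω) : x ∈ N.flowFixed := by
  refine ⟨hx, fun t ξ => ?_⟩
  have flow_eq : N.modularFlow t x = x :=
    N.eq_of_apply_Ω_eq (N.modularFlow_mem t hx) hx (by rw [modularFlow_apply_Ω, h])
  calc x (N.U t ξ) = N.modularFlow t x (N.U t ξ) := by rw [flow_eq]
    _ = N.U t (x ξ) := by rw [modularFlow_apply, U_neg_apply_U]

theorem J_apply_Ω_of_mem_flowFixed {x : H →L[ℂ] H} (hx : x ∈ N.flowFixed) :
    N.J (x N.Ω) = star x N.Ω :=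
  N.S_cond x hx.1 (fun _ => x N.Ω) (by fun_prop) fun t => by rw [← hx.2 t, N.U_Ω]

theorem continuous_U_comp {X : Type*} [TopologicalSpace X] {s : X → ℝ} {g : X → H}
    (hs : Continuous s) (hg : Continuous g) : Continuous fun t => N.U (s t) (g t) := by
  refine continuous_iff_continuousAt.2 fun t₀ => ?_
  rw [ContinuousAt, tendsto_iff_norm_sub_tendsto_zero]
  have bound_tendsto : Tendsto
      (fun t => ‖g t - g t₀‖ + ‖N.U (s t) (g t₀) - N.U (s t₀) (g t₀)‖) (𝓝 t₀) (𝓝 0) := by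
    simpa only [add_zero, Function.comp_apply] using
      (tendsto_iff_norm_sub_tendsto_zero.1 (hg.tendsto t₀)).add
        (tendsto_iff_norm_sub_tendsto_zero.1 (((N.U_cont (g t₀)).comp hs).tendsto t₀))
  refine squeeze_zero (fun _ => norm_nonneg _) (fun t => ?_) bound_tendsto
  calc ‖N.U (s t) (g t) - N.U (s t₀) (g t₀)‖
      = ‖N.U (s t) (g t - g t₀) + (N.U (s t) (g t₀) - N.U (s t₀) (g t₀))‖ := by
        rw [map_sub, sub_add_sub_cancel]
    _ ≤ ‖g t - g t₀‖ + ‖N.U (s t) (g t₀) - N.U (s t₀) (g t₀)‖ :=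
        (norm_add_le _ _).trans_eq (by rw [LinearIsometryEquiv.norm_map])

theorem continuous_modularFlow_apply (x : H →L[ℂ] H) (ξ : H) :
    Continuous fun t => N.modularFlow t x ξ :=
  N.continuous_U_comp continuous_id
    (x.continuous.comp ((N.U_cont ξ).comp continuous_neg))

theorem norm_modularFlow_apply_le (t : ℝ) (x : H →L[ℂ] H) (ξ : H) :
    ‖N.modularFlow t x ξ‖ ≤ ‖x‖ * ‖ξ‖ := by
  rw [modularFlow_apply, LinearIsometryEquiv.norm_map]
  exact (x.le_opNorm _).trans_eq (by rw [LinearIsometryEquiv.norm_map])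

/-- The orbit of `x` under the modular flow in the strong operator topology, as the map
sending `ξ` to the bounded continuous function `t ↦ α_t(x) ξ`. -/
def modularOrbit (x : H →L[ℂ] H) : H →L[ℂ] (ℝ →ᵇ H) :=
  LinearMap.mkContinuous
    { toFun := fun ξ => BoundedContinuousFunction.ofNormedAddCommGroup
        (fun t => N.modularFlow t x ξ) (N.continuous_modularFlow_apply x ξ) (‖x‖ * ‖ξ‖)
        fun t => N.norm_modularFlow_apply_le t x ξ
      map_add' := fun ξ η => by
        ext t
        exact map_add (N.modularFlow t x) ξ η
      map_smul' := fun c ξ => by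
        ext t
        exact map_smul (N.modularFlow t x) c ξ }
    ‖x‖ fun ξ => BoundedContinuousFunction.norm_ofNormedAddCommGroup_le _ (by positivity)
      fun t => N.norm_modularFlow_apply_le t x ξ

end ModularFlow

section GaussianSmoothing

/-- The smoothed operator `x_a = ∫ exp (-(t - a)²) α_t(x) dt`, a strong integral. It is an
entire function of `a`, which makes it accessible to the analytic relation for `S = J Δ^{1/2}`. -/
def gaussianSmoothing (x : H →L[ℂ] H) (a : ℂ) : H →L[ℂ] H :=
  gaussianTransform a ∘L N.modularOrbit x

theorem gaussianSmoothing_apply (x : H →L[ℂ] H) (a : ℂ) (ξ : H) :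
    N.gaussianSmoothing x a ξ = gaussianTransform a (N.modularOrbit x ξ) := rfl

theorem differentiable_gaussianSmoothing_apply (x : H →L[ℂ] H) (ξ : H) :
    Differentiable ℂ fun a => N.gaussianSmoothing x a ξ :=
  differentiable_gaussianTransform _

theorem map_gaussianSmoothing_apply {F : Type*} [NormedAddCommGroup F] [NormedSpace ℂ F]
    [CompleteSpace F] (L : H →L[ℂ] F) (x : H →L[ℂ] H) (a : ℂ) (ξ : H) :
    L (N.gaussianSmoothing x a ξ) =
      gaussianTransform a (L.compLeftContinuousBounded ℝ (N.modularOrbit x ξ)) :=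
  map_gaussianTransform L a _

theorem gaussianSmoothing_mem {x : H →L[ℂ] H} (hx : x ∈ N.M) (a : ℂ) :
    N.gaussianSmoothing x a ∈ N.M := by
  rw [← N.M.commutant_commutant, VonNeumannAlgebra.mem_commutant_iff]
  intro y hy
  ext ξ
  change y (N.gaussianSmoothing x a ξ) = N.gaussianSmoothing x a (y ξ)
  rw [map_gaussianSmoothing_apply, gaussianSmoothing_apply]
  congr 1
  ext t
  exact (DFunLike.congr_fun
    (VonNeumannAlgebra.mem_commutant_iff.1 hy _ (N.modularFlow_mem t hx)) ξ).symm

theorem gaussianSmoothing_mem_centralizerSet {x : H →L[ℂ] H} (hx : x ∈ N.centralizerSet) (a : ℂ) :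
    N.gaussianSmoothing x a ∈ N.centralizerSet := by
  refine ⟨N.gaussianSmoothing_mem hx.1 a, fun y hy => ?_⟩
  change innerSL ℂ N.Ω (N.gaussianSmoothing x a (y N.Ω)) =
    (innerSL ℂ N.Ω ∘L y) (N.gaussianSmoothing x a N.Ω)
  rw [map_gaussianSmoothing_apply, map_gaussianSmoothing_apply]
  congr 1
  ext t
  exact (N.modularFlow_mem_centralizerSet t hx).2 y hy

theorem U_gaussianSmoothing_apply_Ω (x : H →L[ℂ] H) (a : ℂ) (s : ℝ) :
    N.U s (N.gaussianSmoothing x a N.Ω) = N.gaussianSmoothing x (a + s) N.Ω := by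
  refine (N.map_gaussianSmoothing_apply (N.U s : H →L[ℂ] H) x a N.Ω).trans ?_
  rw [gaussianSmoothing_apply, gaussianTransform_add_ofReal]
  congr 1
  ext t
  change N.U s (N.modularFlow t x N.Ω) = N.modularFlow (t + s) x N.Ω
  rw [modularFlow_apply_Ω, modularFlow_apply_Ω, add_comm, N.U_add]

theorem J_gaussianSmoothing_apply_Ω {x : H →L[ℂ] H} (hx : x ∈ N.M) (a : ℂ) :
    N.J (N.gaussianSmoothing x (a - I / 2) N.Ω) = star (N.gaussianSmoothing x a) N.Ω := by
  rw [sub_eq_add_neg, ← neg_div]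
  exact N.S_cond _ (N.gaussianSmoothing_mem hx a) (fun w => N.gaussianSmoothing x (a + w) N.Ω)
    ((N.differentiable_gaussianSmoothing_apply x N.Ω).comp (by fun_prop))
    fun t => (N.U_gaussianSmoothing_apply_Ω x a t).symm

theorem inner_star_apply_gaussianSmoothing {x y : H →L[ℂ] H} (hx : x ∈ N.M) (hy : y ∈ N.M)
    (a : ℂ) :
    ⟪star y N.Ω, N.gaussianSmoothing x a N.Ω⟫_ℂ =
      ⟪N.J (N.gaussianSmoothing x (a + I / 2) N.Ω), y N.Ω⟫_ℂ := by
  set w := N.gaussianSmoothing x (a + I / 2) with hw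
  have hwM : w ∈ N.M := N.gaussianSmoothing_mem hx _
  have smoothing_eq : N.gaussianSmoothing x a N.Ω = N.J (star w N.Ω) := by
    rw [hw, ← N.J_gaussianSmoothing_apply_Ω hx, N.J_invol, add_sub_cancel_right]
  calc ⟪star y N.Ω, N.gaussianSmoothing x a N.Ω⟫_ℂ = ⟪N.Ω, y (N.J (star w (N.J N.Ω)))⟫_ℂ := by
        rw [smoothing_eq, N.J_Ω]
        exact y.adjoint_inner_left _ _
    _ = ⟪N.J N.Ω, N.J (star w (N.J (y N.Ω)))⟫_ℂ := by
        -- `J w* J` lies in the commutant of `M`, so `y` may be moved past it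
        rw [← N.tomita _ (star_mem hwM) y hy, N.J_Ω]
    _ = ⟪N.J (y N.Ω), w N.Ω⟫_ℂ := by
        rw [N.J_inner]
        exact w.adjoint_inner_left _ _
    _ = ⟪N.J (w N.Ω), y N.Ω⟫_ℂ := N.inner_J_left_comm _ _

theorem periodic_gaussianSmoothing_apply_Ω {x : H →L[ℂ] H} (hx : x ∈ N.centralizerSet) :
    Function.Periodic (fun a => N.gaussianSmoothing x a N.Ω) I := by
  suffices half_period : ∀ a,
      N.gaussianSmoothing x (a - I / 2) N.Ω = N.gaussianSmoothing x (a + I / 2) N.Ω by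
    intro a
    have := half_period (a + I / 2)
    rw [add_sub_cancel_right, add_assoc, add_halves] at this
    exact this.symm
  intro a
  refine N.J_injective (N.eq_of_inner_apply_Ω_eq fun y hy => ?_)
  rw [N.J_gaussianSmoothing_apply_Ω hx.1, ← N.inner_star_apply_gaussianSmoothing hx.1 hy]
  calc ⟪star (N.gaussianSmoothing x a) N.Ω, y N.Ω⟫_ℂ
      = ⟪N.Ω, N.gaussianSmoothing x a (y N.Ω)⟫_ℂ := ContinuousLinearMap.adjoint_inner_left _ _ _
    _ = ⟪N.Ω, y (N.gaussianSmoothing x a N.Ω)⟫_ℂ :=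
        (N.gaussianSmoothing_mem_centralizerSet hx a).2 y hy
    _ = ⟪star y N.Ω, N.gaussianSmoothing x a N.Ω⟫_ℂ := (y.adjoint_inner_left _ _).symm

theorem centralizerSet_subset_flowFixed : N.centralizerSet ⊆ N.flowFixed := by
  intro x hx
  have smoothing_const (a b : ℂ) :
      N.gaussianSmoothing x a N.Ω = N.gaussianSmoothing x b N.Ω :=
    apply_eq_apply_of_imaginary_period (N.differentiable_gaussianSmoothing_apply x N.Ω)
      (fun a s => by rw [← U_gaussianSmoothing_apply_Ω, LinearIsometryEquiv.norm_map]) one_ne_zero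
      (by simpa using N.periodic_gaussianSmoothing_apply_Ω hx) a b
  refine N.mem_flowFixed_of_U_apply_Ω_eq hx.1 fun s => ?_
  have orbit_invariant : (N.U s : H →L[ℂ] H).compLeftContinuousBounded ℝ (N.modularOrbit x N.Ω) =
      N.modularOrbit x N.Ω := by
    refine eq_of_gaussianTransform_eq fun a => ?_
    calc gaussianTransform a ((N.U s : H →L[ℂ] H).compLeftContinuousBounded ℝ
          (N.modularOrbit x N.Ω))
        = N.U s (N.gaussianSmoothing x a N.Ω) := (N.map_gaussianSmoothing_apply _ x a N.Ω).symm
      _ = N.gaussianSmoothing x (a + s) N.Ω := N.U_gaussianSmoothing_apply_Ω x a s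
      _ = N.gaussianSmoothing x a N.Ω := smoothing_const _ _
  have at_zero : N.U s (N.modularFlow 0 x N.Ω) = N.modularFlow 0 x N.Ω :=
    DFunLike.congr_fun orbit_invariant 0
  rwa [modularFlow_apply_Ω, N.U_zero] at at_zero

end GaussianSmoothing

section Center

variable {N}

theorem mem_centralizerSet_of_mem_centerSet {z : H →L[ℂ] H} (hz : z ∈ N.centerSet) :
    z ∈ N.centralizerSet :=
  ⟨hz.1, fun y hy => congrArg (inner ℂ N.Ω) (DFunLike.congr_fun (hz.2 y hy) N.Ω)⟩

theorem J_star_J_of_mem_centerSet {z : H →L[ℂ] H} (hz : z ∈ N.centerSet) (ξ : H) :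
    N.J (star z (N.J ξ)) = z ξ := by
  have hzΩ := N.J_apply_Ω_of_mem_flowFixed
    (N.centralizerSet_subset_flowFixed (mem_centralizerSet_of_mem_centerSet hz))
  have hJ := N.continuous_J
  refine congrFun (Continuous.ext_on N.cyclic (f := fun η => N.J (star z (N.J η))) (by fun_prop)
    z.continuous ?_) ξ
  rintro _ ⟨y, hy, rfl⟩
  calc N.J (star z (N.J (y N.Ω))) = y (N.J (star z (N.J N.Ω))) :=
        N.tomita _ (star_mem hz.1) y hy N.Ω
    _ = y (z N.Ω) := by rw [N.J_Ω, ← hzΩ, N.J_invol]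
    _ = z (y N.Ω) := (DFunLike.congr_fun (hz.2 y hy) N.Ω).symm

end Center

section TwistedCenter

variable {N} {x x₁ x₂ y z : H →L[ℂ] H}

theorem mul_eq_V_mul_V_mul_of_mem_twistedCenter (hx : x ∈ N.twistedCenter) (hy : y ∈ N.M) :
    x * y = N.V * y * N.V * x := by
  ext ξ
  have commute := N.tomita _ (star_mem hx.1) _ (N.V_mul_mul_V_mem hy) (N.V ξ)
  simpa only [hx.2, mul_apply_eq_comp, N.V_invol] using commute

theorem V_star_apply_Ω_of_mem_twistedCenter (hx : x ∈ N.twistedCenter) :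
    N.V (star x N.Ω) = star x N.Ω := by
  have J_star_apply_Ω : N.J (star x N.Ω) = x N.Ω := by
    simpa only [N.J_Ω, N.V_Ω] using hx.2 N.Ω
  refine ext_inner_right ℂ fun η => ?_
  calc ⟪N.V (star x N.Ω), η⟫_ℂ = ⟪N.Ω, x (N.V η)⟫_ℂ := by
        rw [inner_V_left]
        exact x.adjoint_inner_left _ _
    _ = ⟪N.J N.Ω, N.J (star x (N.J η))⟫_ℂ := by rw [hx.2, N.J_Ω]
    _ = ⟪N.J η, x N.Ω⟫_ℂ := by
        rw [N.J_inner]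
        exact x.adjoint_inner_left _ _
    _ = ⟪star x N.Ω, η⟫_ℂ := by rw [← J_star_apply_Ω, N.J_inner]

theorem mem_gammaFixed_iff : x ∈ N.gammaFixed ↔ x ∈ N.M ∧ N.V * x * N.V = x :=
  and_congr_right fun _ => (ContinuousLinearMap.ext_iff (f := N.V * x * N.V)).symm

theorem mem_gammaFixed_of_mem_twistedCenter (hx : x ∈ N.twistedCenter) : x ∈ N.gammaFixed := by
  have hxM : star x ∈ N.M := star_mem hx.1
  have star_fixed : N.V * star x * N.V = star x :=
    N.eq_of_apply_Ω_eq (N.V_mul_mul_V_mem hxM) hxM (by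
      simp only [mul_apply_eq_comp, N.V_Ω, V_star_apply_Ω_of_mem_twistedCenter hx])
  refine mem_gammaFixed_iff.2 ⟨hx.1, ?_⟩
  simpa only [star_mul, star_star, N.V_star, mul_assoc] using congrArg star star_fixed

theorem mem_centralizerSet_of_mem_twistedCenter (hx : x ∈ N.twistedCenter) :
    x ∈ N.centralizerSet := by
  refine ⟨hx.1, fun y hy => ?_⟩
  have V_apply_Ω : N.V (x N.Ω) = x N.Ω := by
    simpa only [N.V_Ω] using (mem_gammaFixed_of_mem_twistedCenter hx).2 N.Ω
  calc ⟪N.Ω, x (y N.Ω)⟫_ℂ = ⟪N.Ω, N.V (y (N.V (x N.Ω)))⟫_ℂ :=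
        congrArg (inner ℂ N.Ω) (DFunLike.congr_fun
          (mul_eq_V_mul_V_mul_of_mem_twistedCenter hx hy) N.Ω)
    _ = ⟪N.Ω, y (x N.Ω)⟫_ℂ := by rw [← inner_V_left, N.V_Ω, V_apply_Ω]

theorem mul_mem_gammaFixed (h₁ : x₁ ∈ N.gammaFixed) (h₂ : x₂ ∈ N.gammaFixed) :
    x₁ * x₂ ∈ N.gammaFixed := by
  rw [mem_gammaFixed_iff] at *
  refine ⟨mul_mem h₁.1 h₂.1, ?_⟩
  calc N.V * (x₁ * x₂) * N.V = N.V * x₁ * (N.V * N.V) * x₂ * N.V := by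
        simp only [N.V_mul_V, mul_one, mul_assoc]
    _ = (N.V * x₁ * N.V) * (N.V * x₂ * N.V) := by simp only [mul_assoc]
    _ = x₁ * x₂ := by rw [h₁.2, h₂.2]

theorem mul_mem_centerSet_of_mem_twistedCenter (h₁ : x₁ ∈ N.twistedCenter)
    (h₂ : x₂ ∈ N.twistedCenter) : x₁ * x₂ ∈ N.centerSet := by
  refine ⟨mul_mem h₁.1 h₂.1, fun y hy => ?_⟩
  calc x₁ * x₂ * y = x₁ * (N.V * y * N.V) * x₂ := by
        rw [mul_assoc, mul_eq_V_mul_V_mul_of_mem_twistedCenter h₂ hy, mul_assoc x₁]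
    _ = (N.V * N.V) * y * (N.V * N.V) * x₁ * x₂ := by
        rw [mul_eq_V_mul_V_mul_of_mem_twistedCenter h₁ (N.V_mul_mul_V_mem hy)]
        simp only [mul_assoc]
    _ = y * (x₁ * x₂) := by rw [N.V_mul_V, one_mul, mul_one, mul_assoc]

theorem mul_mem_twistedCenter_of_mem_centerSet (hx : x ∈ N.twistedCenter) (hz : z ∈ N.centerSet) :
    x * z ∈ N.twistedCenter := by
  refine ⟨mul_mem hx.1 hz.1, fun ξ => ?_⟩
  calc N.J (star (x * z) (N.J ξ)) = N.J (star z (N.J (N.J (star x (N.J ξ))))) := by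
        rw [star_mul, mul_apply_eq_comp, N.J_invol]
    _ = (z * x) (N.V ξ) := by
        rw [J_star_J_of_mem_centerSet hz, hx.2, mul_apply_eq_comp]
    _ = (x * z) (N.V ξ) := by rw [hz.2 x hx.1]

end TwistedCenter

end GradedVN

/-- Basic properties of the twisted center `Z(M, V)` of a graded von
Neumann algebra: (i) `Z(M,V) ⊆ M^γ ∩ M^α`; (ii) every `x ∈ Z(M,V)` satisfies
`x y = (V y V) x` for `y ∈ M`; (iii) products of two elements of `Z(M,V)` lie in the
`Ad_V`-invariant part of the center; (iv) `Z(M,V)` absorbs the center: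
`x z = z x ∈ Z(M,V)` for `x ∈ Z(M,V)`, `z ∈ Z(M)`. -/
theorem twisted_center_properties {H : Type*} [NormedAddCommGroup H]
    [InnerProductSpace ℂ H] [CompleteSpace H] (N : GradedVN H) :
    (N.twistedCenter ⊆ N.gammaFixed ∩ N.flowFixed) ∧
    (∀ x ∈ N.twistedCenter, ∀ y ∈ N.M, x * y = N.V * y * N.V * x) ∧
    (∀ x₁ ∈ N.twistedCenter, ∀ x₂ ∈ N.twistedCenter,
      x₁ * x₂ ∈ N.centerSet ∩ N.gammaFixed) ∧
    (∀ x ∈ N.twistedCenter, ∀ z ∈ N.centerSet,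
      x * z = z * x ∧ x * z ∈ N.twistedCenter) := by
  refine ⟨fun x hx => ⟨GradedVN.mem_gammaFixed_of_mem_twistedCenter hx, ?_⟩,
    fun x hx y hy => GradedVN.mul_eq_V_mul_V_mul_of_mem_twistedCenter hx hy,
    fun x₁ h₁ x₂ h₂ => ⟨GradedVN.mul_mem_centerSet_of_mem_twistedCenter h₁ h₂, ?_⟩,
    fun x hx z hz => ⟨(hz.2 x hx.1).symm, GradedVN.mul_mem_twistedCenter_of_mem_centerSet hx hz⟩⟩
  · exact N.centralizerSet_subset_flowFixed (GradedVN.mem_centralizerSet_of_mem_twistedCenter hx)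
  · exact GradedVN.mul_mem_gammaFixed (GradedVN.mem_gammaFixed_of_mem_twistedCenter h₁)
      (GradedVN.mem_gammaFixed_of_mem_twistedCenter h₂)

end
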